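/- Let A be a C*-algebra, M ⊆ A a C*-subalgebra, and J ⊆ A a closed two-sided ideal with J ∩ M = {0}. If φ is a state of M that has a unique extension to a state φ̃ of A, then φ̃(x + m) = φ(m) for every x ∈ J and m ∈ M; in particular, φ̃ vanishes on J. -/

import Mathlib

open ComplexOrder

/-- A state on a (possibly non-unital) C*-algebra: a positive continuous linear
functional of norm one. -/
def IsState {A : Type*} [NonUnitalNormedRing A] [StarRing A] [NormedSpace ℂ A]
    (ψ : A →L[ℂ] ℂ) : Prop :=
  (∀ a : A, 0 ≤ ψ (star a * a)) ∧ ‖ψ‖ = 1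

/-!
The pairs `(a, m)` with `m ∈ M` and `a - m ∈ J ∩ J*` form a C*-subalgebra `D` of `A × A`. As
`J ∩ M = 0`, the first projection embeds `D` into `A`, so the state `(a, m) ↦ φ m` of `D` extends
along it to a state `f` of `A` (by Hahn–Banach, through the unitization), which restricts to `φ`
on `M`. For `x ∈ J` the pair `(x* x, 0)` lies in `D`, so `f (x* x) = 0` and `f x = 0` by the
Cauchy–Schwarz inequality. Uniqueness gives `f = ψ`. Working with `J ∩ J*` avoids having to show
that closed ideals are self-adjoint.
-/

open Filter Topology
open scoped CStarAlgebra

theorem exists_norm_eq_apply_linearIsometry_eq {𝕜 E F : Type*} [RCLike 𝕜]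
    [NormedAddCommGroup E] [NormedSpace 𝕜 E] [NormedAddCommGroup F] [NormedSpace 𝕜 F]
    (i : E →ₗᵢ[𝕜] F) (f : E →L[𝕜] 𝕜) :
    ∃ g : F →L[𝕜] 𝕜, ‖g‖ = ‖f‖ ∧ ∀ x, g (i x) = f x := by
  obtain ⟨g, hg, hg_norm⟩ := exists_extension_norm_eq (LinearMap.range i.toLinearMap)
    (f.comp (i.equivRange.symm.toContinuousLinearEquiv : _ →L[𝕜] E))
  refine ⟨g, hg_norm.trans (f.opNorm_comp_linearIsometryEquiv i.equivRange.symm), fun x => ?_⟩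
  simpa using! hg (i.equivRange x)

section Positivity

variable {U : Type*} [CStarAlgebra U]

theorem norm_star_mul_self_sub_algebraMap_le {b : U} {z : ℂ} (hz : ‖star b * b‖ ≤ 2 * z.re) :
    ‖star b * b - algebraMap ℂ U z‖ ≤ ‖z‖ := by
  let _ := CStarAlgebra.spectralOrder U
  have := CStarAlgebra.spectralOrderedRing U
  nontriviality U
  have hb : IsStarNormal (star b * b) := (IsSelfAdjoint.star_mul_self b).isStarNormal
  have hcfc : star b * b - algebraMap ℂ U z = cfc (fun w : ℂ => w - z) (star b * b) := by
    rw [cfc_sub .., cfc_id' ℂ _, cfc_const ..]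
  -- The spectrum of `b* b` lies in `[0, 2 re z]`, hence in the disc about `z` through `0`.
  rw [hcfc]
  refine norm_cfc_le (norm_nonneg z) fun w hw => ?_
  have hw_nonneg : 0 ≤ w := spectrum_nonneg_of_nonneg (star_mul_self_nonneg b) hw
  obtain ⟨hw_re, hw_im⟩ := Complex.nonneg_iff.mp hw_nonneg
  have hw_le : w.re ≤ 2 * z.re :=
    (Complex.re_le_norm w).trans ((spectrum.norm_le_norm_of_mem hw).trans hz)
  rw [← sq_le_sq₀ (norm_nonneg _) (norm_nonneg _), Complex.sq_norm, Complex.sq_norm,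
    Complex.normSq_apply, Complex.normSq_apply]
  simp only [Complex.sub_re, Complex.sub_im, ← hw_im]
  nlinarith [mul_nonneg hw_re (sub_nonneg.mpr hw_le)]

theorem complex_nonneg_of_forall_norm_sub_le {w : ℂ} {c : ℝ} (hc : 0 ≤ c)
    (h : ∀ t : ℝ, ‖w - ⟨c, t⟩‖ ≤ ‖(⟨c, t⟩ : ℂ)‖) : 0 ≤ w := by
  have key (t : ℝ) : w.re ^ 2 + w.im ^ 2 ≤ 2 * (c * w.re + t * w.im) := by
    have ht := h t
    rw [← sq_le_sq₀ (norm_nonneg _) (norm_nonneg _), Complex.sq_norm, Complex.sq_norm,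
      Complex.normSq_apply, Complex.normSq_apply] at ht
    simp only [Complex.sub_re, Complex.sub_im] at ht
    linarith
  have him : w.im = 0 := by
    by_contra hne
    have h1 := key (-(c * w.re) / w.im)
    rw [div_mul_cancel₀ _ hne] at h1
    nlinarith [sq_pos_of_ne_zero hne, sq_nonneg w.re]
  have hre : 0 ≤ w.re := by
    have h0 := key 0
    by_contra! hneg
    nlinarith
  exact Complex.nonneg_iff.mpr ⟨hre, him.symm⟩

theorem apply_star_mul_self_nonneg_of_norm_le_one_of_apply_one {F : U →L[ℂ] ℂ} (hF : ‖F‖ ≤ 1)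
    (hF_one : F 1 = 1) (b : U) : 0 ≤ F (star b * b) := by
  refine complex_nonneg_of_forall_norm_sub_le (norm_nonneg (star b * b)) fun t => ?_
  have hF_algebraMap (z : ℂ) : F (algebraMap ℂ U z) = z := by
    rw [Algebra.algebraMap_eq_smul_one, map_smul, hF_one, smul_eq_mul, mul_one]
  set z : ℂ := ⟨‖star b * b‖, t⟩
  have hz : ‖star b * b‖ ≤ 2 * z.re := by linarith [norm_nonneg (star b * b)]
  calc ‖F (star b * b) - z‖ = ‖F (star b * b - algebraMap ℂ U z)‖ := by
        rw [map_sub, hF_algebraMap]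
    _ ≤ ‖star b * b - algebraMap ℂ U z‖ :=
      (F.le_of_opNorm_le_of_le hF le_rfl).trans_eq (one_mul _)
    _ ≤ ‖z‖ := norm_star_mul_self_sub_algebraMap_le hz

-- Evaluate `F` at `b* b - 1/2`, which has norm at most `1/2`.
theorem two_mul_re_apply_star_mul_self_sub_one_le {F : U →L[ℂ] ℂ} (hF : ‖F‖ ≤ 1) {b : U}
    (hb : ‖b‖ ≤ 1) : 2 * (F (star b * b)).re - 1 ≤ (F 1).re := by
  have hb_sub : ‖star b * b - algebraMap ℂ U ↑(1 / 2 : ℝ)‖ ≤ 1 / 2 := by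
    have hb_sq : ‖star b * b‖ ≤ 2 * (↑(1 / 2 : ℝ) : ℂ).re := by
      rw [CStarRing.norm_star_mul_self, Complex.ofReal_re, mul_one_div_cancel two_ne_zero]
      exact mul_le_one₀ hb (norm_nonneg b) hb
    refine (norm_star_mul_self_sub_algebraMap_le hb_sq).trans_eq ?_
    exact Complex.norm_of_nonneg one_half_pos.le
  have hF_sub : F (star b * b - algebraMap ℂ U ↑(1 / 2 : ℝ)) =
      F (star b * b) - ↑(1 / 2 : ℝ) * F 1 := by
    rw [map_sub, Algebra.algebraMap_eq_smul_one, map_smul, smul_eq_mul]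
  have hre_sub : (F (star b * b)).re - 1 / 2 * (F 1).re ≤ 1 / 2 := by
    rw [← Complex.re_ofReal_mul, ← Complex.sub_re, ← hF_sub]
    exact (Complex.re_le_norm _).trans
      ((F.le_of_opNorm_le_of_le hF hb_sub).trans_eq (one_mul _))
  linarith

end Positivity

section CauchySchwarz

variable {B : Type*} [NonUnitalCStarAlgebra B] {φ : B →L[ℂ] ℂ}

theorem norm_apply_star_mul_sq_le (hφ : ∀ a : B, 0 ≤ φ (star a * a)) (a b : B) :
    ‖φ (star a * b)‖ ^ 2 ≤ (φ (star a * a)).re * (φ (star b * b)).re := by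
  let _ := CStarAlgebra.spectralOrder B
  have := CStarAlgebra.spectralOrderedRing B
  let f : B →ₚ[ℂ] ℂ := .mk₀ (φ : B →ₗ[ℂ] ℂ) fun x hx => by
    obtain ⟨y, rfl⟩ := CStarAlgebra.nonneg_iff_eq_star_mul_self.mp hx
    exact hφ y
  have hf_norm (c : B) : ‖f.toPreGNS c‖ ^ 2 = (φ (star c * c)).re := by
    simpa [← Complex.ofReal_pow] using! congrArg Complex.re (f.preGNS_norm_sq (f.toPreGNS c))
  rw [← hf_norm, ← hf_norm, ← mul_pow]
  gcongr
  exact norm_inner_le_norm (𝕜 := ℂ) (f.toPreGNS a) (f.toPreGNS b)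

theorem norm_apply_sq_le_norm_mul_re_apply_star_mul_self (hφ : ∀ a : B, 0 ≤ φ (star a * a))
    (a : B) : ‖φ a‖ ^ 2 ≤ ‖φ‖ * (φ (star a * a)).re := by
  let _ := CStarAlgebra.spectralOrder B
  have := CStarAlgebra.spectralOrderedRing B
  have hl := CStarAlgebra.increasingApproximateUnit B
  have := hl.neBot
  have hlim : Tendsto (fun e => ‖φ (e * a)‖ ^ 2) (CStarAlgebra.approximateUnit B)
      (𝓝 (‖φ a‖ ^ 2)) :=
    ((φ.continuous.tendsto a).comp (hl.tendsto_mul_right a)).norm.pow 2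
  refine le_of_tendsto hlim ?_
  filter_upwards [hl.eventually_star_eq, hl.eventually_norm] with e he_star he_norm
  have he : (φ (star e * e)).re ≤ ‖φ‖ :=
    calc (φ (star e * e)).re ≤ ‖φ (star e * e)‖ := Complex.re_le_norm _
      _ ≤ ‖φ‖ * ‖star e * e‖ := φ.le_opNorm _
      _ ≤ ‖φ‖ * 1 := by
        rw [CStarRing.norm_star_mul_self]
        gcongr
        exact mul_le_one₀ he_norm (norm_nonneg e) he_norm
      _ = ‖φ‖ := mul_one _
  calc ‖φ (e * a)‖ ^ 2 = ‖φ (star e * a)‖ ^ 2 := by rw [he_star]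
    _ ≤ (φ (star e * e)).re * (φ (star a * a)).re := norm_apply_star_mul_sq_le hφ e a
    _ ≤ ‖φ‖ * (φ (star a * a)).re := by
      gcongr
      exact (Complex.nonneg_iff.mp (hφ a)).1

theorem apply_eq_zero_of_apply_star_mul_self_eq_zero (hφ : ∀ a : B, 0 ≤ φ (star a * a)) {a : B}
    (ha : φ (star a * a) = 0) : φ a = 0 := by
  simpa [ha] using norm_apply_sq_le_norm_mul_re_apply_star_mul_self hφ a

end CauchySchwarz

theorem isState_comp_of_apply_section_eq {A C E : Type*} [NonUnitalCStarAlgebra A]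
    [NonUnitalCStarAlgebra C] [SeminormedAddCommGroup E] [NormedSpace ℂ E] {φ : E →L[ℂ] ℂ}
    (hφ : ‖φ‖ = 1) {F : C →L[ℂ] ℂ} (hF_nonneg : ∀ c, 0 ≤ F (star c * c)) (hF_norm : ‖F‖ ≤ 1)
    (j : A →⋆ₙₐ[ℂ] C) {σ : E → A} (hσ : ∀ b, ‖σ b‖ ≤ ‖b‖) (hFσ : ∀ b, F (j (σ b)) = φ b) :
    IsState (F.comp ⟨(j : A →ₗ[ℂ] C), map_continuous j⟩) := by
  set ψ : A →L[ℂ] ℂ := F.comp ⟨(j : A →ₗ[ℂ] C), map_continuous j⟩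
  have hψ (a : A) : ψ a = F (j a) := rfl
  refine ⟨fun a => ?_, le_antisymm ?_ ?_⟩
  · rw [hψ, map_mul, map_star]
    exact hF_nonneg (j a)
  · refine ψ.opNorm_le_bound zero_le_one fun a => ?_
    exact F.le_of_opNorm_le_of_le hF_norm (NonUnitalStarAlgHom.norm_apply_le j a)
  · rw [← hφ]
    refine φ.opNorm_le_bound (norm_nonneg ψ) fun b => ?_
    rw [← hFσ, ← hψ]
    exact ψ.le_opNorm_of_le (hσ b)

namespace IsState

variable {A B : Type*} [NonUnitalCStarAlgebra A] [NonUnitalCStarAlgebra B]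

theorem exists_lt_re_apply_star_mul_self {φ : B →L[ℂ] ℂ} (hφ : IsState φ) {r : ℝ} (hr : r < 1) :
    ∃ u : B, ‖u‖ ≤ 1 ∧ r < (φ (star u * u)).re := by
  have hr_sqrt : √r < ‖φ‖ := by
    rw [hφ.2, Real.sqrt_lt' one_pos, one_pow]
    exact hr
  obtain ⟨u, hu, hru⟩ := φ.exists_lt_apply_of_lt_opNorm hr_sqrt
  refine ⟨u, hu.le, ?_⟩
  calc r < ‖φ u‖ ^ 2 := Real.lt_sq_of_sqrt_lt hru
    _ ≤ ‖φ‖ * (φ (star u * u)).re := norm_apply_sq_le_norm_mul_re_apply_star_mul_self hφ.1 u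
    _ = (φ (star u * u)).re := by rw [hφ.2, one_mul]

theorem apply_one_of_norm_le_one_of_comp {U : Type*} [CStarAlgebra U] {φ : B →L[ℂ] ℂ}
    (hφ : IsState φ) (ι : B →⋆ₙₐ[ℂ] U) {F : U →L[ℂ] ℂ} (hF : ‖F‖ ≤ 1)
    (hFι : ∀ b, F (ι b) = φ b) : F 1 = 1 := by
  have hF_one : ‖F 1‖ ≤ 1 :=
    (F.le_of_opNorm_le_of_le hF (by nontriviality U; simp : ‖(1 : U)‖ ≤ 1)).trans_eq (mul_one 1)
  have hre : 1 ≤ (F 1).re := by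
    by_contra! hlt
    obtain ⟨u, hu, hFu⟩ :=
      hφ.exists_lt_re_apply_star_mul_self (show ((F 1).re + 1) / 2 < 1 by linarith)
    have hιu : ‖ι u‖ ≤ 1 := (NonUnitalStarAlgHom.norm_apply_le ι u).trans hu
    have hF_le := two_mul_re_apply_star_mul_self_sub_one_le hF hιu
    rw [← map_star, ← map_mul, hFι] at hF_le
    linarith
  have hre_eq : (F 1).re = 1 := ((Complex.re_le_norm _).trans hF_one).antisymm hre
  have him : (F 1).im = 0 :=
    Complex.abs_re_eq_norm.mp ((Complex.abs_re_le_norm _).antisymm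
      (hF_one.trans (hre.trans (le_abs_self _))))
  exact Complex.ext hre_eq him

theorem exists_apply_eq_of_injective {φ : B →L[ℂ] ℂ} (hφ : IsState φ) (ι : B →⋆ₙₐ[ℂ] A)
    (hι : Function.Injective ι) : ∃ ψ : A →L[ℂ] ℂ, IsState ψ ∧ ∀ b, ψ (ι b) = φ b := by
  let j : A →⋆ₙₐ[ℂ] Unitization ℂ A := Unitization.inrNonUnitalStarAlgHom ℂ A
  have hjι : Isometry (j.comp ι) :=
    NonUnitalStarAlgHom.isometry _ (Unitization.inr_injective.comp hι)
  obtain ⟨F, hF_norm, hF⟩ := exists_norm_eq_apply_linearIsometry_eq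
    (LinearMap.toLinearIsometry (j.comp ι : B →ₗ[ℂ] Unitization ℂ A) hjι) φ
  have hF_le : ‖F‖ ≤ 1 := (hF_norm.trans hφ.2).le
  have hF_one : F 1 = 1 := hφ.apply_one_of_norm_le_one_of_comp (j.comp ι) hF_le hF
  exact ⟨F.comp ⟨(j : A →ₗ[ℂ] Unitization ℂ A), map_continuous j⟩,
    isState_comp_of_apply_section_eq hφ.2
      (apply_star_mul_self_nonneg_of_norm_le_one_of_apply_one hF_le hF_one) hF_le j
      (NonUnitalStarAlgHom.norm_apply_le ι) hF, hF⟩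

end IsState

section FiberProduct

variable {R A : Type*} [CommRing R] [StarRing R] [NonUnitalRing A] [StarRing A] [Module R A]
  [StarModule R A]

/-- The fibre product of `A` and `M` over `A ⧸ (J ∩ J*)`: the pairs `(a, m)` with `m ∈ M` and
`a - m ∈ J ∩ J*`. It carries the functional `(a, m) ↦ φ m` that is to be extended to `A`. -/
def fiberProductModIdeal (M : NonUnitalStarSubalgebra R A) (J : Submodule R A)
    (hJl : ∀ a : A, ∀ x ∈ J, a * x ∈ J) (hJr : ∀ a : A, ∀ x ∈ J, x * a ∈ J) :
    NonUnitalStarSubalgebra R (A × A) where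
  carrier := {p | p.1 - p.2 ∈ J ∧ star (p.1 - p.2) ∈ J ∧ p.2 ∈ M}
  zero_mem' := by simp
  add_mem' := by
    rintro p q ⟨hp, hp_star, hpM⟩ ⟨hq, hq_star, hqM⟩
    have h_sub : (p + q).1 - (p + q).2 = (p.1 - p.2) + (q.1 - q.2) := add_sub_add_comm ..
    rw [Set.mem_ofPred_eq, h_sub, star_add]
    exact ⟨J.add_mem hp hq, J.add_mem hp_star hq_star, M.add_mem hpM hqM⟩
  mul_mem' := by
    rintro p q ⟨hp, hp_star, hpM⟩ ⟨hq, hq_star, hqM⟩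
    have h_sub : (p * q).1 - (p * q).2 = (p.1 - p.2) * q.1 + p.2 * (q.1 - q.2) := by
      simp only [Prod.fst_mul, Prod.snd_mul]
      noncomm_ring
    rw [Set.mem_ofPred_eq, h_sub, star_add, star_mul, star_mul]
    exact ⟨J.add_mem (hJr _ _ hp) (hJl _ _ hq), J.add_mem (hJl _ _ hp_star) (hJr _ _ hq_star),
      M.mul_mem hpM hqM⟩
  smul_mem' := by
    rintro c p ⟨hp, hp_star, hpM⟩
    have h_sub : (c • p).1 - (c • p).2 = c • (p.1 - p.2) := (smul_sub ..).symm
    rw [Set.mem_ofPred_eq, h_sub, star_smul]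
    exact ⟨J.smul_mem _ hp, J.smul_mem _ hp_star, SMulMemClass.smul_mem c hpM⟩
  star_mem' := by
    rintro p ⟨hp, hp_star, hpM⟩
    have h_sub : (star p).1 - (star p).2 = star (p.1 - p.2) := (star_sub ..).symm
    rw [Set.mem_ofPred_eq, h_sub, star_star]
    exact ⟨hp_star, hp, star_mem hpM⟩

namespace fiberProductModIdeal

variable {M : NonUnitalStarSubalgebra R A} {J : Submodule R A}
  {hJl : ∀ a : A, ∀ x ∈ J, a * x ∈ J} {hJr : ∀ a : A, ∀ x ∈ J, x * a ∈ J}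

theorem diag_mem {m : A} (hm : m ∈ M) : (m, m) ∈ fiberProductModIdeal M J hJl hJr := by
  refine ⟨?_, ?_, hm⟩ <;> simp

theorem star_mul_self_zero_mem {x : A} (hx : x ∈ J) :
    (star x * x, 0) ∈ fiberProductModIdeal M J hJl hJr := by
  refine ⟨?_, ?_, M.zero_mem⟩ <;> simpa using hJl (star x) x hx

theorem isClosed [TopologicalSpace A] [IsTopologicalAddGroup A] [ContinuousStar A]
    (hM : IsClosed (M : Set A)) (hJ : IsClosed (J : Set A)) :
    IsClosed (fiberProductModIdeal M J hJl hJr : Set (A × A)) := by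
  have h_sub : Continuous fun p : A × A => p.1 - p.2 := continuous_fst.sub continuous_snd
  exact (hJ.preimage h_sub).inter ((hJ.preimage h_sub.star).inter (hM.preimage continuous_snd))

variable (M J hJl hJr)

/-- The projection `(a, m) ↦ a`. -/
def fst : fiberProductModIdeal M J hJl hJr →⋆ₙₐ[R] A :=
  (NonUnitalStarAlgHom.fst R A A).comp (NonUnitalStarSubalgebraClass.subtype _)

/-- The projection `(a, m) ↦ m`. -/
def snd : fiberProductModIdeal M J hJl hJr →⋆ₙₐ[R] M :=
  NonUnitalStarAlgHom.codRestrict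
    ((NonUnitalStarAlgHom.snd R A A).comp (NonUnitalStarSubalgebraClass.subtype _)) M
    fun p => p.2.2.2

variable {M J hJl hJr}

theorem fst_injective (hJM : ∀ x ∈ J, x ∈ M → x = 0) :
    Function.Injective (fst M J hJl hJr) := by
  rw [injective_iff_map_eq_zero]
  rintro ⟨⟨a, m⟩, hJ, -, hm⟩ (rfl : a = 0)
  have hmJ : m ∈ J := by simpa using hJ
  exact Subtype.ext (Prod.ext rfl (hJM m hmJ hm))

end fiberProductModIdeal

end FiberProduct

namespace IsState

variable {A : Type*} [NonUnitalCStarAlgebra A]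

theorem exists_extension_eq_zero_on_ideal {M : NonUnitalStarSubalgebra ℂ A}
    (hM : IsClosed (M : Set A)) {J : Submodule ℂ A} (hJc : IsClosed (J : Set A))
    (hJl : ∀ a : A, ∀ x ∈ J, a * x ∈ J) (hJr : ∀ a : A, ∀ x ∈ J, x * a ∈ J)
    (hJM : ∀ x ∈ J, x ∈ M → x = 0) {φ : M →L[ℂ] ℂ} (hφ : IsState φ) :
    ∃ f : A →L[ℂ] ℂ, IsState f ∧ (∀ m : M, f m = φ m) ∧ ∀ x ∈ J, f x = 0 := by
  let D := fiberProductModIdeal M J hJl hJr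
  have hD : IsClosed (D : Set (A × A)) := fiberProductModIdeal.isClosed hM hJc
  let snd : D →⋆ₙₐ[ℂ] M := fiberProductModIdeal.snd M J hJl hJr
  let diag (m : M) : D := ⟨(m, m), fiberProductModIdeal.diag_mem m.2⟩
  have hχ : IsState (φ.comp ⟨(snd : D →ₗ[ℂ] M), map_continuous snd⟩) :=
    isState_comp_of_apply_section_eq hφ.2 hφ.1 hφ.2.le snd (σ := diag)
      (fun m => (max_self ‖m‖).le) fun _ => rfl
  obtain ⟨f, hf, hfχ⟩ := hχ.exists_apply_eq_of_injective (fiberProductModIdeal.fst M J hJl hJr)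
    (fiberProductModIdeal.fst_injective hJM)
  refine ⟨f, hf, fun m => hfχ (diag m), fun x hx => ?_⟩
  refine apply_eq_zero_of_apply_star_mul_self_eq_zero hf.1 ?_
  exact (hfχ ⟨_, fiberProductModIdeal.star_mul_self_zero_mem hx⟩).trans (map_zero φ)

end IsState

/-- If `J` is a closed two-sided ideal with `J ∩ M = {0}` and `φ` is a state of `M`
with unique state extension `ψ` to `A`, then `ψ (x + m) = φ m` for `x ∈ J`, `m ∈ M`;
in particular `ψ` vanishes on `J`. -/
theorem unique_extension_kills_ideal {A : Type*}
    [NonUnitalNormedRing A] [StarRing A] [CStarRing A] [NormedSpace ℂ A]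
    [IsScalarTower ℂ A A] [SMulCommClass ℂ A A] [StarModule ℂ A] [CompleteSpace A]
    (M : NonUnitalStarSubalgebra ℂ A) (hM : IsClosed (M : Set A))
    (J : Submodule ℂ A) (hJc : IsClosed (J : Set A))
    (hJl : ∀ a : A, ∀ x ∈ J, a * x ∈ J) (hJr : ∀ a : A, ∀ x ∈ J, x * a ∈ J)
    (hJM : (J : Set A) ∩ (M : Set A) = {0})
    (φ : M →L[ℂ] ℂ) (hφ : IsState φ)
    (ψ : A →L[ℂ] ℂ) (hψ : IsState ψ) (hψext : ∀ m : M, ψ (m : A) = φ m)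
    (huniq : ∀ ψ' : A →L[ℂ] ℂ, IsState ψ' → (∀ m : M, ψ' (m : A) = φ m) → ψ' = ψ) :
    (∀ x ∈ J, ∀ m : M, ψ (x + (m : A)) = φ m) ∧ (∀ x ∈ J, ψ x = 0) := by
  let _ : NonUnitalCStarAlgebra A := {}
  have hJM_zero : ∀ x ∈ J, x ∈ M → x = 0 := fun x hxJ hxM => hJM.subset ⟨hxJ, hxM⟩
  obtain ⟨f, hf, hfφ, hfJ⟩ := hφ.exists_extension_eq_zero_on_ideal hM hJc hJl hJr hJM_zero
  obtain rfl : f = ψ := huniq f hf hfφ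
  refine ⟨fun x hx m => ?_, hfJ⟩
  rw [map_add, hfJ x hx, hfφ, zero_add]
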